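/- (The nonstandard flat in orthoplex-type RAAGs.) Let k ≥ 0 and suppose Γ contains 2(k+1) distinct vertices a_0, b_0, a_1, b_1, …, a_k, b_k such that for all i ≠ j every one of a_i, b_i is adjacent in Γ to every one of a_j, b_j, while a_i is not adjacent to b_i for each i. For each i define γ_i : ℤ → A_Γ by γ_i(0) = 1, γ_i(m) = the alternating positive word of length m beginning with a_i (i.e., a_i b_i a_i b_i ⋯) for m > 0, and γ_i(m) = the alternating positive word of length |m| beginning with b_i (i.e., b_i a_i b_i a_i ⋯) for m < 0. Define F : ℤ^{k+1} → A_Γ by F(x_0, …, x_k) = γ_0(x_0)·γ_1(x_1)⋯γ_k(x_k) (these factors pairwise commute). Then F is injective, and for every x ∈ ℤ^{k+1} one has h(F(x)) = |x_0| + |x_1| + ⋯ + |x_k| and |F(x)| = |x_0| + |x_1| + ⋯ + |x_k|. In particular, F carries the ℓ¹-sphere of radius r in ℤ^{k+1} into the sphere of radius r of the word metric on A_Γ. -/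

import Mathlib

/-- The commutator relators of the right-angled Artin group on the graph `Γ`. -/
def raagRels {V : Type*} (Γ : SimpleGraph V) : Set (FreeGroup V) :=
  {r | ∃ u v : V, Γ.Adj u v ∧
    r = FreeGroup.of u * FreeGroup.of v * (FreeGroup.of u)⁻¹ * (FreeGroup.of v)⁻¹}

/-- The right-angled Artin group `A_Γ` on the graph `Γ`. -/
abbrev RAAG {V : Type*} (Γ : SimpleGraph V) : Type _ :=
  PresentedGroup (raagRels Γ)

/-- The generator of `A_Γ` corresponding to the vertex `v`. -/
def RAAG.gen {V : Type*} (Γ : SimpleGraph V) (v : V) : RAAG Γ :=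
  PresentedGroup.of v

/-- Word length of `g` with respect to a generating set `X`: the least `n` such that
`g` is a product of `n` elements of `X ∪ X⁻¹`. -/
noncomputable def wlen {G : Type*} [Group G] (X : Set G) (g : G) : ℕ :=
  sInf {n | ∃ l : List G, l.length = n ∧ (∀ x ∈ l, x ∈ X ∨ x⁻¹ ∈ X) ∧ l.prod = g}

/-- Word length in `A_Γ` with respect to the vertex generating set. -/
noncomputable def RAAG.wordLength {V : Type*} (Γ : SimpleGraph V) (g : RAAG Γ) : ℕ :=
  wlen (Set.range (RAAG.gen Γ)) g

/-- The letter `v^e` (with `e = true` for `v` and `e = false` for `v⁻¹`). -/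
def RAAG.letter {V : Type*} (Γ : SimpleGraph V) (v : V) (e : Bool) : RAAG Γ :=
  if e then RAAG.gen Γ v else (RAAG.gen Γ v)⁻¹

/-- The alternating product `x y x y ⋯` of length `n`. -/
def altProd {G : Type*} [Monoid G] (x y : G) : ℕ → G
  | 0 => 1
  | n + 1 => x * altProd y x n

theorem altProd_map {G H : Type*} [Monoid G] [Monoid H] (f : G →* H) (n : ℕ) :
    ∀ x y : G, f (altProd x y n) = altProd (f x) (f y) n := by
  induction n with
  | zero => intro x y; simp [altProd]
  | succ n ih => intro x y; simp [altProd, ih]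

theorem altProd_one {G : Type*} [Monoid G] (n : ℕ) : altProd (1 : G) 1 n = 1 := by
  induction n with
  | zero => simp [altProd]
  | succ n ih => simp [altProd, ih]

theorem altProd_commute {G : Type*} [Monoid G] (z : G) (n : ℕ) :
    ∀ x y : G, Commute z x → Commute z y → Commute z (altProd x y n) := by
  induction n with
  | zero => intro x y _ _; exact Commute.one_right z
  | succ n ih => intro x y hx hy; exact hx.mul_right (ih y x hy hx)

theorem altProd_height {G : Type*} [Monoid G] (h : G →* Multiplicative ℤ) (n : ℕ) :
    ∀ x y : G, h x = Multiplicative.ofAdd 1 → h y = Multiplicative.ofAdd 1 →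
      Multiplicative.toAdd (h (altProd x y n)) = n := by
  induction n with
  | zero => intro x y _ _; simp [altProd]
  | succ n ih => intro x y hx hy; simp [altProd, ih y x hy hx, hx]; ring

theorem prod_ofFn_single {G : Type*} [Monoid G] (n : ℕ) :
    ∀ (f : Fin n → G) (i : Fin n), (∀ j, j ≠ i → f j = 1) → (List.ofFn f).prod = f i := by
  induction n with
  | zero => intro f i; exact i.elim0
  | succ n ih =>
    intro f i hf
    rw [List.ofFn_succ, List.prod_cons]
    rcases Fin.eq_zero_or_eq_succ i with rfl | ⟨j, rfl⟩
    · have : (List.ofFn fun i : Fin n => f i.succ).prod = 1 := by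
        apply List.prod_eq_one
        intro x hx
        obtain ⟨j, rfl⟩ := (List.mem_ofFn' _ _).1 hx
        exact hf _ (Fin.succ_ne_zero j)
      rw [this, mul_one]
    · rw [hf 0 (Fin.succ_ne_zero j).symm, one_mul]
      exact ih (fun i => f i.succ) j fun l hl => hf _ (by simpa using hl)

def IsWord {G : Type*} [Group G] (X : Set G) (n : ℕ) (g : G) : Prop :=
  ∃ l : List G, l.length = n ∧ (∀ x ∈ l, x ∈ X ∨ x⁻¹ ∈ X) ∧ l.prod = g

theorem IsWord.one {G : Type*} [Group G] (X : Set G) : IsWord X 0 1 := ⟨[], by simp⟩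

theorem IsWord.mul {G : Type*} [Group G] {X : Set G} {m n : ℕ} {g k : G}
    (hg : IsWord X m g) (hk : IsWord X n k) : IsWord X (m + n) (g * k) := by
  obtain ⟨l, rfl, h2, rfl⟩ := hg
  obtain ⟨l', rfl, h2', rfl⟩ := hk
  refine ⟨l ++ l', by simp, ?_, by simp⟩
  intro x hx
  rcases List.mem_append.1 hx with h | h
  · exact h2 x h
  · exact h2' x h

theorem IsWord.alt {G : Type*} [Group G] {X : Set G} (n : ℕ) :
    ∀ x y : G, x ∈ X → y ∈ X → IsWord X n (altProd x y n) := by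
  induction n with
  | zero => intro x y _ _; exact IsWord.one X
  | succ n ih =>
    intro x y hx hy
    have h1 : IsWord X 1 x := ⟨[x], by simp [hx]⟩
    have h2 := h1.mul (ih y x hy hx)
    rw [Nat.add_comm 1 n] at h2
    exact h2

theorem IsWord.ofFn {G : Type*} [Group G] {X : Set G} (n : ℕ) :
    ∀ (f : Fin n → G) (c : Fin n → ℕ), (∀ i, IsWord X (c i) (f i)) →
      IsWord X (∑ i, c i) (List.ofFn f).prod := by
  induction n with
  | zero => intro f c _; simpa using IsWord.one X
  | succ n ih =>
    intro f c hc
    rw [List.ofFn_succ, List.prod_cons, Fin.sum_univ_succ]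
    exact (hc 0).mul (ih _ _ fun i => hc i.succ)

theorem height_le {G : Type*} [Group G] {X : Set G} (h : G →* Multiplicative ℤ)
    (hX : ∀ x ∈ X, h x = Multiplicative.ofAdd 1) (l : List G)
    (hl : ∀ x ∈ l, x ∈ X ∨ x⁻¹ ∈ X) : Multiplicative.toAdd (h l.prod) ≤ l.length := by
  induction l with
  | nil => simp
  | cons x l ih =>
    have h1 := ih fun y hy => hl y (List.mem_cons_of_mem _ hy)
    have h2 : Multiplicative.toAdd (h x) ≤ 1 := by
      rcases hl x List.mem_cons_self with hx | hx
      · rw [hX x hx]; simp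
      · have h3 := hX _ hx
        rw [map_inv] at h3
        have h4 : -Multiplicative.toAdd (h x) = 1 := by
          rw [← toAdd_inv, h3]; rfl
        omega
    simp only [List.prod_cons, map_mul, toAdd_mul, List.length_cons]
    push_cast
    omega

/-- The reflection `x ↦ c - x` of `ℤ`. -/
def reflZ (c : ℤ) : Equiv.Perm ℤ := Equiv.subLeft c

theorem reflZ_alt (n : ℕ) :
    altProd (reflZ 1) (reflZ (-1)) n 0 = n ∧ altProd (reflZ (-1)) (reflZ 1) n 0 = -(n : ℤ) := by
  induction n with
  | zero => simp [altProd]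
  | succ n ih =>
    simp only [altProd, Equiv.Perm.mul_apply, ih.1, ih.2]
    simp only [reflZ, Equiv.subLeft_apply]
    push_cast
    constructor <;> ring

open Classical in
theorem exists_refl_hom {V : Type*} (Γ : SimpleGraph V) (p q : V) (hpq : p ≠ q)
    (hn : ¬ Γ.Adj p q) : ∃ f : RAAG Γ →* Equiv.Perm ℤ, f (RAAG.gen Γ p) = reflZ 1 ∧
      f (RAAG.gen Γ q) = reflZ (-1) ∧ ∀ v, v ≠ p → v ≠ q → f (RAAG.gen Γ v) = 1 := by
  let φ : V → Equiv.Perm ℤ := fun v => if v = p then reflZ 1 else if v = q then reflZ (-1) else 1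
  have hφ : ∀ r ∈ raagRels Γ, FreeGroup.lift φ r = 1 := by
    rintro r ⟨u, v, huv, rfl⟩
    have hc : φ u * φ v = φ v * φ u := by
      have hn' : ¬ Γ.Adj q p := fun h => hn h.symm
      simp only [φ]
      split_ifs <;> subst_vars <;> simp_all
    simp only [map_mul, map_inv, FreeGroup.lift_apply_of]
    rw [hc]; group
  refine ⟨PresentedGroup.toGroup hφ, ?_, ?_, ?_⟩
  · simp [RAAG.gen, φ]
  · simp [RAAG.gen, φ, hpq.symm]
  · intro v h1 h2; simp [RAAG.gen, φ, h1, h2]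

theorem raag_orthoplex_nonstandard_flat {V : Type*} [Fintype V] (Γ : SimpleGraph V)
    (k : ℕ) (a b : Fin (k + 1) → V)
    (ha : Function.Injective a) (hb : Function.Injective b)
    (hab : ∀ i j : Fin (k + 1), a i ≠ b j)
    (hadj : ∀ i j : Fin (k + 1), i ≠ j →
      Γ.Adj (a i) (a j) ∧ Γ.Adj (a i) (b j) ∧ Γ.Adj (b i) (a j) ∧ Γ.Adj (b i) (b j))
    (hnadj : ∀ i : Fin (k + 1), ¬ Γ.Adj (a i) (b i))
    (h : RAAG Γ →* Multiplicative ℤ)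
    (hh : ∀ v : V, h (RAAG.gen Γ v) = Multiplicative.ofAdd (1 : ℤ))
    (γ : Fin (k + 1) → ℤ → RAAG Γ)
    (hγ : ∀ (i : Fin (k + 1)) (m : ℤ), γ i m =
      if 0 ≤ m then altProd (RAAG.gen Γ (a i)) (RAAG.gen Γ (b i)) m.toNat
      else altProd (RAAG.gen Γ (b i)) (RAAG.gen Γ (a i)) (-m).toNat)
    (F : (Fin (k + 1) → ℤ) → RAAG Γ)
    (hF : ∀ x : Fin (k + 1) → ℤ, F x = (List.ofFn fun i => γ i (x i)).prod) :
    (∀ i j : Fin (k + 1), i ≠ j → ∀ m n : ℤ, Commute (γ i m) (γ j n)) ∧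
    Function.Injective F ∧
    (∀ x : Fin (k + 1) → ℤ,
      Multiplicative.toAdd (h (F x)) = ∑ i, |x i|) ∧
    (∀ x : Fin (k + 1) → ℤ,
      RAAG.wordLength Γ (F x) = ∑ i, (x i).natAbs) := by

  have hgc : ∀ u v, Γ.Adj u v → Commute (RAAG.gen Γ u) (RAAG.gen Γ v) := by
    intro u v huv
    have := PresentedGroup.one_of_mem (rels := raagRels Γ) ⟨u, v, huv, rfl⟩
    simp only [map_mul, map_inv] at this
    have h2 := mul_inv_eq_one.1 this
    exact mul_inv_eq_iff_eq_mul.1 h2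
  have hγh : ∀ i m, Multiplicative.toAdd (h (γ i m)) = |m| := by
    intro i m
    rw [hγ]
    split_ifs with hm
    · rw [altProd_height h _ _ _ (hh _) (hh _), abs_of_nonneg hm]; omega
    · rw [altProd_height h _ _ _ (hh _) (hh _), abs_of_neg (by omega)]; omega
  have hFh : ∀ x : Fin (k + 1) → ℤ, Multiplicative.toAdd (h (F x)) = ∑ i, |x i| := by
    intro x
    rw [hF, map_list_prod, List.map_ofFn, List.prod_ofFn, toAdd_prod]
    exact Finset.sum_congr rfl fun i _ => hγh i (x i)
  refine ⟨?_, ?_, hFh, ?_⟩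
  · intro i j hij m n
    obtain ⟨h1, h2, h3, h4⟩ := hadj i j hij
    have key : ∀ z, Commute z (RAAG.gen Γ (a j)) → Commute z (RAAG.gen Γ (b j)) →
        Commute z (γ j n) := by
      intro z hz1 hz2
      rw [hγ]
      split_ifs
      · exact altProd_commute z _ _ _ hz1 hz2
      · exact altProd_commute z _ _ _ hz2 hz1
    have ka := (key _ (hgc _ _ h1) (hgc _ _ h2)).symm
    have kb := (key _ (hgc _ _ h3) (hgc _ _ h4)).symm
    rw [hγ i]
    split_ifs
    · exact (altProd_commute _ _ _ _ ka kb).symm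
    · exact (altProd_commute _ _ _ _ kb ka).symm
  · have key : ∀ i, ∃ f : RAAG Γ →* Equiv.Perm ℤ, ∀ x, f (F x) 0 = x i := by
      intro i
      obtain ⟨f, fa, fb, fo⟩ := exists_refl_hom Γ (a i) (b i) (hab i i) (hnadj i)
      refine ⟨f, fun x => ?_⟩
      rw [hF, map_list_prod, List.map_ofFn, prod_ofFn_single _ _ i]
      · simp only [Function.comp_apply]
        rw [hγ]
        split_ifs with hm
        · rw [altProd_map, fa, fb, (reflZ_alt _).1]; omega
        · rw [altProd_map, fa, fb, (reflZ_alt _).2]; omega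
      · intro j hj
        have e1 := fo (a j) (fun e => hj (ha e)) (hab j i)
        have e2 := fo (b j) (fun e => hab i j e.symm) (fun e => hj (hb e))
        simp only [Function.comp_apply]
        rw [hγ]
        split_ifs <;> rw [altProd_map, e1, e2, altProd_one]
    intro x y hxy
    funext i
    obtain ⟨f, hf⟩ := key i
    rw [← hf x, ← hf y, hxy]
  · intro x
    have hw : IsWord (Set.range (RAAG.gen Γ)) (∑ i, (x i).natAbs) (F x) := by
      rw [hF]
      apply IsWord.ofFn
      intro i
      rw [hγ]
      split_ifs with hm
      · rw [show (x i).natAbs = (x i).toNat by omega]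
        exact IsWord.alt _ _ _ ⟨_, rfl⟩ ⟨_, rfl⟩
      · rw [show (x i).natAbs = (-(x i)).toNat by omega]
        exact IsWord.alt _ _ _ ⟨_, rfl⟩ ⟨_, rfl⟩
    apply le_antisymm
    · exact Nat.sInf_le hw
    · refine le_csInf ⟨_, hw⟩ ?_
      rintro n ⟨l, rfl, hl, hp⟩
      have h1 := height_le h (by rintro _ ⟨v, rfl⟩; exact hh v) l hl
      rw [hp, hFh] at h1
      zify
      exact h1
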